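/- Let μ₁, μ₂ be probability measures on the unit circle 𝕋, and let α = ∫_𝕋 ζ dμ₁(ζ) (so |α| ≤ 1). Define η(z) = η_{μ₁}(α^{-1} η_{μ₂}(αz)) if α ≠ 0, and η(z) = η_{μ₁}(η'_{μ₂}(0)·z) if α = 0. Then η is analytic on 𝔻 and |η(z)| ≤ |z| for all z ∈ 𝔻; consequently η = η_μ for a unique probability measure μ on 𝕋. -/

import Mathlib

open MeasureTheory Complex

/-!
A function `η` is the `η`-transform of a probability measure on the circle iff it is analytic with
`|η(z)| ≤ |z|`. Indeed `η = 1 - 1 / (1 + ψ)`, and `1 + ψ` averages the functions `1 / (1 - zζ)`,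
whose real part is at least `1 / 2`; this says `|η| ≤ 1`, and the Schwarz lemma improves it to
`|η(z)| ≤ |z|`. Conversely, `(1 - η)⁻¹` has real part at least `1 / 2`. If it extends continuously
to the closed disc, the Poisson formula turns its boundary values into the density of the measure;
the general case follows by dilating and using weak-* compactness. The measure is unique because
the Taylor coefficients of `1 + ψ` are its Fourier coefficients.

The theorem follows since `|η(z)| ≤ |z|` is stable under composition, and both `α⁻¹ η₂(αz)` and its
convention `η₂'(0) z` at `α = 0` equal `z · dslope η₂ 0 (αz)`, where `|dslope η₂ 0| ≤ 1` on the
disc, again by the Schwarz lemma.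
-/

open Metric Set Filter AddCircle
open scoped Topology

lemma norm_one_sub_inv_le_one_iff {w : ℂ} (hw : w ≠ 0) : ‖1 - w⁻¹‖ ≤ 1 ↔ 1 / 2 ≤ w.re := by
  have h_sub : 1 - w⁻¹ = (w - 1) / w := by field_simp
  rw [h_sub, norm_div, div_le_one₀ (norm_pos_iff.2 hw), ← sq_le_sq₀ (norm_nonneg _) (norm_nonneg _),
    Complex.sq_norm, Complex.sq_norm, normSq_apply, normSq_apply, sub_re, sub_im, one_re, one_im]
  constructor <;> intro h <;> linarith

lemma one_sub_ne_zero_of_norm_lt_one {w : ℂ} (hw : ‖w‖ < 1) : 1 - w ≠ 0 :=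
  (isUnit_one_sub_of_norm_lt_one hw).ne_zero

lemma half_le_re_inv_one_sub {w : ℂ} (hw : ‖w‖ < 1) : 1 / 2 ≤ ((1 - w)⁻¹).re := by
  rw [← norm_one_sub_inv_le_one_iff (inv_ne_zero (one_sub_ne_zero_of_norm_lt_one hw)), inv_inv,
    sub_sub_cancel]
  exact hw.le

lemma integrable_of_continuous {X E : Type*} [TopologicalSpace X] [CompactSpace X]
    [MeasurableSpace X] [OpensMeasurableSpace X] [NormedAddCommGroup E] {μ : Measure X}
    [IsFiniteMeasureOnCompacts μ] {f : X → E} (hf : Continuous f) : Integrable f μ :=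
  hf.integrable_of_hasCompactSupport (.of_compactSpace f)

lemma continuous_integral_continuousMap {X E : Type*} [TopologicalSpace X] [CompactSpace X]
    [MeasurableSpace X] [BorelSpace X] [NormedAddCommGroup E] [NormedSpace ℝ E]
    [SecondCountableTopologyEither X E] (μ : Measure X) [IsFiniteMeasure μ] :
    Continuous fun f : C(X, E) ↦ ∫ x, f x ∂μ := by
  have h_integral := continuous_integral.comp (ContinuousMap.toLp (E := E) 1 μ ℝ).continuous
  exact h_integral.congr fun f ↦ integral_congr_ae (ContinuousMap.coeFn_toLp (𝕜 := ℝ) μ f)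

lemma isProbabilityMeasure_withDensity_ofReal {X : Type*} [MeasurableSpace X] {μ : Measure X}
    {f : X → ℝ} (hf_int : Integrable f μ) (hf_nonneg : 0 ≤ f) (hf_one : ∫ x, f x ∂μ = 1) :
    IsProbabilityMeasure (μ.withDensity fun x ↦ ENNReal.ofReal (f x)) := by
  rw [isProbabilityMeasure_iff, withDensity_apply _ .univ, Measure.restrict_univ,
    ← ofReal_integral_eq_lintegral_ofReal hf_int (.of_forall hf_nonneg), hf_one, ENNReal.ofReal_one]

lemma eqOn_of_re_eq_of_eq {U : Set ℂ} {f g : ℂ → ℂ} (hf : DifferentiableOn ℂ f U)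
    (hg : DifferentiableOn ℂ g U) (hU : IsOpen U) (hU' : IsPreconnected U)
    (h_re : ∀ z ∈ U, (f z).re = (g z).re) {z₀ : ℂ} (hz₀ : z₀ ∈ U) (h_eq : f z₀ = g z₀) :
    EqOn f g U := by
  obtain ⟨c, hc⟩ := AnalyticOnNhd.eq_const_of_re_eq_const ((hf.sub hg).analyticOnNhd hU)
    (c₀ := 0) (fun z hz ↦ by simp [h_re z hz]) hU ⟨⟨z₀, hz₀⟩, hU'⟩
  have hc_zero : c = 0 := by simpa [h_eq] using (hc z₀ hz₀).symm
  exact fun z hz ↦ sub_eq_zero.1 ((hc z hz).trans hc_zero)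

lemma diffContOnCl_comp_const_mul {g : ℂ → ℂ} (hg : DifferentiableOn ℂ g (ball 0 1)) {r : ℂ}
    (hr : ‖r‖ < 1) : DiffContOnCl ℂ (fun z ↦ g (r * z)) (ball 0 1) := by
  refine DifferentiableOn.diffContOnCl (hg.comp (by fun_prop) fun z hz ↦ ?_)
  rw [mem_ball_zero_iff, norm_mul]
  have hz := mem_closedBall_zero_iff.1 (closure_ball_subset_closedBall hz)
  exact mul_lt_one_of_nonneg_of_lt_one_left (norm_nonneg r) hr hz

lemma herglotzRieszKernel_zero_inv {w u : ℂ} (hu : u ≠ 0) (hwu : 1 - w * u ≠ 0) :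
    herglotzRieszKernel 0 w u⁻¹ = 2 * (1 - w * u)⁻¹ - 1 := by
  rw [herglotzRieszKernel_def]
  grind

section MomentGF

variable {T : ℝ}

/-- The generating function `z ↦ ∫ (1 - zζ)⁻¹ dμ(ζ)` of the moments of a measure on the circle. The
circle is encoded as `AddCircle T`, whose point `θ` stands for `ζ = e^{2πiθ/T}`. -/
noncomputable def momentGF (μ : Measure (AddCircle T)) (z : ℂ) : ℂ :=
  ∫ θ, (1 - z * toCircle θ)⁻¹ ∂μ

/-- The transform `ψ_μ(z) = ∫ zζ/(1 - zζ) dμ(ζ)` of a measure on the circle. -/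
noncomputable def psiTransform (μ : Measure (AddCircle T)) (z : ℂ) : ℂ :=
  ∫ θ, z * toCircle θ / (1 - z * toCircle θ) ∂μ

/-- The transform `η_μ = ψ_μ / (1 + ψ_μ)` of a measure on the circle. -/
noncomputable def etaTransform (μ : Measure (AddCircle T)) (z : ℂ) : ℂ :=
  psiTransform μ z / (1 + psiTransform μ z)

@[simp]
lemma momentGF_zero (μ : Measure (AddCircle T)) [IsProbabilityMeasure μ] : momentGF μ 0 = 1 := by
  simp [momentGF]

lemma norm_mul_toCircle (z : ℂ) (θ : AddCircle T) : ‖z * toCircle θ‖ = ‖z‖ := by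
  rw [norm_mul, Circle.norm_coe, mul_one]

lemma one_sub_mul_toCircle_ne_zero {z : ℂ} (hz : ‖z‖ < 1) (θ : AddCircle T) :
    1 - z * toCircle θ ≠ 0 :=
  one_sub_ne_zero_of_norm_lt_one (by rwa [norm_mul_toCircle])

lemma continuous_inv_one_sub_mul_toCircle {z : ℂ} (hz : ‖z‖ < 1) :
    Continuous fun θ : AddCircle T ↦ (1 - z * toCircle θ)⁻¹ :=
  Continuous.inv₀ (by fun_prop) (one_sub_mul_toCircle_ne_zero hz)

variable [Fact (0 < T)] {μ : Measure (AddCircle T)}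

lemma integrable_inv_one_sub_mul_toCircle [IsFiniteMeasure μ] {z : ℂ} (hz : ‖z‖ < 1) :
    Integrable (fun θ ↦ (1 - z * toCircle θ)⁻¹) μ :=
  integrable_of_continuous (continuous_inv_one_sub_mul_toCircle hz)

lemma hasSum_momentGF [IsFiniteMeasure μ] {z : ℂ} (hz : ‖z‖ < 1) :
    HasSum (fun n : ℕ ↦ (∫ θ, (toCircle θ : ℂ) ^ n ∂μ) * z ^ n) (momentGF μ z) := by
  have h_geom (θ : AddCircle T) : HasSum (fun n : ℕ ↦ (toCircle θ : ℂ) ^ n * z ^ n)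
      (1 - z * toCircle θ)⁻¹ := by
    simpa only [mul_pow, mul_comm] using
      hasSum_geometric_of_norm_lt_one (ξ := z * toCircle θ) (by rwa [norm_mul_toCircle])
  simp only [← integral_mul_const]
  exact hasSum_integral_of_dominated_convergence (fun n _ ↦ ‖z‖ ^ n)
    (fun n ↦ (integrable_of_continuous (by fun_prop)).aestronglyMeasurable)
    (fun n ↦ .of_forall fun θ ↦ by simp [Circle.norm_coe])
    (.of_forall fun _ ↦ summable_geometric_of_lt_one (norm_nonneg z) hz)
    (integrable_const _) (.of_forall h_geom)

lemma hasFPowerSeriesOnBall_momentGF (μ : Measure (AddCircle T)) [IsFiniteMeasure μ] :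
    HasFPowerSeriesOnBall (momentGF μ)
      (.ofScalars ℂ fun n : ℕ ↦ ∫ θ, (toCircle θ : ℂ) ^ n ∂μ) 0 1 where
  r_le := by
    refine FormalMultilinearSeries.le_radius_of_bound (r := 1) _ (μ.real univ) fun n ↦ ?_
    simpa [FormalMultilinearSeries.ofScalars_norm] using
      norm_integral_le_of_norm_le_const (μ := μ) (f := fun θ ↦ (toCircle θ : ℂ) ^ n) (C := 1)
        (.of_forall fun θ ↦ by simp [Circle.norm_coe])
  r_pos := one_pos
  hasSum {z} hz := by
    have hz : ‖z‖ < 1 := by simpa [← ofReal_norm] using hz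
    simpa [mul_comm] using hasSum_momentGF (μ := μ) hz

lemma differentiableOn_momentGF (μ : Measure (AddCircle T)) [IsFiniteMeasure μ] :
    DifferentiableOn ℂ (momentGF μ) (ball 0 1) := by
  have := (hasFPowerSeriesOnBall_momentGF μ).differentiableOn
  rwa [← ENNReal.ofReal_one, Metric.eball_ofReal] at this

lemma half_mul_le_re_momentGF [IsFiniteMeasure μ] {z : ℂ} (hz : ‖z‖ < 1) :
    μ.real univ / 2 ≤ (momentGF μ z).re := by
  have h_int := integrable_inv_one_sub_mul_toCircle (μ := μ) hz
  calc μ.real univ / 2 = ∫ _, (1 / 2 : ℝ) ∂μ := by simp; ring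
    _ ≤ ∫ θ, ((1 - z * toCircle θ)⁻¹).re ∂μ :=
      integral_mono (integrable_const _) h_int.re fun θ ↦
        half_le_re_inv_one_sub (by rwa [norm_mul_toCircle])
    _ = (momentGF μ z).re := integral_re h_int

lemma half_le_re_momentGF [IsProbabilityMeasure μ] {z : ℂ} (hz : ‖z‖ < 1) :
    1 / 2 ≤ (momentGF μ z).re := by
  simpa using half_mul_le_re_momentGF (μ := μ) hz

lemma momentGF_ne_zero [IsProbabilityMeasure μ] {z : ℂ} (hz : ‖z‖ < 1) : momentGF μ z ≠ 0 := by
  intro h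
  have := half_le_re_momentGF (μ := μ) hz
  norm_num [h] at this

lemma psiTransform_eq [IsProbabilityMeasure μ] {z : ℂ} (hz : ‖z‖ < 1) :
    psiTransform μ z = momentGF μ z - 1 := by
  have h_kernel (θ : AddCircle T) :
      z * toCircle θ / (1 - z * toCircle θ) = (1 - z * toCircle θ)⁻¹ - 1 := by
    have := one_sub_mul_toCircle_ne_zero hz θ
    field_simp
    ring
  simp_rw [psiTransform, h_kernel]
  rw [integral_sub (integrable_inv_one_sub_mul_toCircle hz) (integrable_const _)]
  simp [momentGF]

lemma etaTransform_eq [IsProbabilityMeasure μ] {z : ℂ} (hz : ‖z‖ < 1) :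
    etaTransform μ z = 1 - (momentGF μ z)⁻¹ := by
  rw [etaTransform, psiTransform_eq hz, add_sub_cancel, sub_div, div_self (momentGF_ne_zero hz),
    one_div]

end MomentGF

/-- The analytic self-maps of the unit disc covered by the Schwarz lemma, i.e. those with
`|f(z)| ≤ |z|`. These are exactly the `η`-transforms of probability measures on the circle. -/
structure IsSchwarzFunction (f : ℂ → ℂ) : Prop where
  differentiableOn : DifferentiableOn ℂ f (ball 0 1)
  norm_le {z : ℂ} (hz : z ∈ ball 0 1) : ‖f z‖ ≤ ‖z‖

lemma isSchwarzFunction_etaTransform {T : ℝ} [Fact (0 < T)] (μ : Measure (AddCircle T))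
    [IsProbabilityMeasure μ] : IsSchwarzFunction (etaTransform μ) := by
  have h_eq : EqOn (etaTransform μ) (fun z ↦ 1 - (momentGF μ z)⁻¹) (ball 0 1) :=
    fun z hz ↦ etaTransform_eq (mem_ball_zero_iff.1 hz)
  have h_diff : DifferentiableOn ℂ (etaTransform μ) (ball 0 1) :=
    (((differentiableOn_momentGF μ).inv fun z hz ↦
      momentGF_ne_zero (mem_ball_zero_iff.1 hz)).const_sub 1).congr h_eq
  have h_maps : MapsTo (etaTransform μ) (ball 0 1) (closedBall 0 1) := by
    intro z hz
    have hz' := mem_ball_zero_iff.1 hz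
    rw [h_eq hz, mem_closedBall_zero_iff, norm_one_sub_inv_le_one_iff (momentGF_ne_zero hz')]
    exact half_le_re_momentGF hz'
  have h_zero : etaTransform μ 0 = 0 := by simp [etaTransform_eq]
  exact ⟨h_diff, fun hz ↦ norm_le_norm_of_mapsTo_ball h_diff h_maps h_zero (mem_ball_zero_iff.1 hz)⟩

namespace IsSchwarzFunction

variable {f g : ℂ → ℂ}

lemma map_zero (hf : IsSchwarzFunction f) : f 0 = 0 := by
  simpa using hf.norm_le (mem_ball_self one_pos)

lemma mapsTo_ball (hf : IsSchwarzFunction f) : MapsTo f (ball 0 1) (ball 0 1) := fun z hz ↦ by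
  rw [mem_ball_zero_iff] at hz ⊢
  exact (hf.norm_le (mem_ball_zero_iff.2 hz)).trans_lt hz

lemma comp (hf : IsSchwarzFunction f) (hg : IsSchwarzFunction g) : IsSchwarzFunction (f ∘ g) where
  differentiableOn := hf.differentiableOn.comp hg.differentiableOn hg.mapsTo_ball
  norm_le hz := (hf.norm_le (hg.mapsTo_ball hz)).trans (hg.norm_le hz)

lemma mul_dslope_const_mul (hf : IsSchwarzFunction f) {α : ℂ} (hα : ‖α‖ ≤ 1) :
    IsSchwarzFunction fun z ↦ z * dslope f 0 (α * z) := by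
  have h_maps : MapsTo (α * ·) (ball (0 : ℂ) 1) (ball 0 1) := fun z hz ↦ by
    rw [mem_ball_zero_iff] at hz ⊢
    calc ‖α * z‖ = ‖α‖ * ‖z‖ := norm_mul α z
      _ ≤ 1 * ‖z‖ := by gcongr
      _ < 1 := by rwa [one_mul]
  have h_dslope : DifferentiableOn ℂ (dslope f 0) (ball 0 1) :=
    (differentiableOn_dslope (ball_mem_nhds 0 one_pos)).2 hf.differentiableOn
  have h_le {w : ℂ} (hw : w ∈ ball 0 1) : ‖dslope f 0 w‖ ≤ 1 := by
    simpa using norm_dslope_le_div_of_mapsTo_ball (R₂ := 1) hf.differentiableOn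
      (by simpa only [hf.map_zero] using hf.mapsTo_ball.mono_right ball_subset_closedBall) hw
  refine ⟨differentiableOn_id.mul (h_dslope.comp (by fun_prop) h_maps), fun {z} hz ↦ ?_⟩
  calc ‖z * dslope f 0 (α * z)‖ = ‖z‖ * ‖dslope f 0 (α * z)‖ := norm_mul _ _
    _ ≤ ‖z‖ * 1 := by gcongr; exact h_le (h_maps hz)
    _ = ‖z‖ := mul_one _

end IsSchwarzFunction

lemma ite_inv_mul_eq_mul_dslope {f : ℂ → ℂ} (hf : f 0 = 0) (α z : ℂ) :
    (if α ≠ 0 then α⁻¹ * f (α * z) else deriv f 0 * z) = z * dslope f 0 (α * z) := by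
  rcases eq_or_ne α 0 with rfl | hα
  · simp [mul_comm]
  rcases eq_or_ne z 0 with rfl | hz
  · simp [hf]
  rw [if_pos hα, dslope_of_ne _ (mul_ne_zero hα hz), slope_def_field, hf]
  field_simp
  rw [sub_zero, sub_zero, mul_comm]

section Uniqueness

variable {T : ℝ} [Fact (0 < T)] {μ ν : Measure (AddCircle T)}

lemma ext_of_forall_integral_fourier_eq [IsFiniteMeasure μ] [IsFiniteMeasure ν]
    (h : ∀ n : ℤ, ∫ θ, fourier n θ ∂μ = ∫ θ, fourier n θ ∂ν) : μ = ν := by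
  have h_int (ρ : Measure (AddCircle T)) [IsFiniteMeasure ρ] (f : C(AddCircle T, ℂ)) :
      Integrable f ρ := integrable_of_continuous f.continuous
  have h_span (f : C(AddCircle T, ℂ)) (hf : f ∈ Submodule.span ℂ (range fourier)) :
      ∫ θ, f θ ∂μ = ∫ θ, f θ ∂ν := by
    induction hf using Submodule.span_induction with
    | mem f hf => obtain ⟨n, rfl⟩ := hf; exact h n
    | zero => simp
    | add f g _ _ hf hg =>
      simp only [ContinuousMap.add_apply, integral_add (h_int _ f) (h_int _ g), hf, hg]
    | smul c f _ hf => simp only [ContinuousMap.smul_apply, integral_smul, hf]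
  have h_dense : Dense (Submodule.span ℂ (range (@fourier T)) : Set C(AddCircle T, ℂ)) :=
    Submodule.dense_iff_topologicalClosure_eq_top.2 span_fourier_closure_eq_top
  have h_eq := (continuous_integral_continuousMap μ).ext_on h_dense
    (continuous_integral_continuousMap ν) h_span
  refine ext_of_forall_integral_eq_of_IsFiniteMeasure fun f ↦ ?_
  have h_f : ∫ θ, (f θ : ℂ) ∂μ = ∫ θ, (f θ : ℂ) ∂ν :=
    congrFun h_eq ⟨fun θ ↦ (f θ : ℂ), by fun_prop⟩
  rwa [integral_complex_ofReal, integral_complex_ofReal, ofReal_inj] at h_f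

lemma ext_of_forall_integral_toCircle_pow_eq [IsFiniteMeasure μ] [IsFiniteMeasure ν]
    (h : ∀ n : ℕ, ∫ θ, (toCircle θ : ℂ) ^ n ∂μ = ∫ θ, (toCircle θ : ℂ) ^ n ∂ν) : μ = ν := by
  have h_nat (n : ℕ) : ∫ θ, fourier n θ ∂μ = ∫ θ, fourier n θ ∂ν := by
    simpa only [fourier_apply, toCircle_zsmul, zpow_natCast, Circle.coe_pow] using h n
  refine ext_of_forall_integral_fourier_eq fun n ↦ ?_
  obtain ⟨m, rfl | rfl⟩ := n.eq_nat_or_neg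
  · exact h_nat m
  · simp only [fourier_neg, integral_conj, h_nat m]

lemma ext_of_eqOn_momentGF [IsFiniteMeasure μ] [IsFiniteMeasure ν]
    (h : EqOn (momentGF μ) (momentGF ν) (ball 0 1)) : μ = ν := by
  have h_series := (hasFPowerSeriesOnBall_momentGF μ).hasFPowerSeriesAt
    |>.eq_formalMultilinearSeries_of_eventually
      (hasFPowerSeriesOnBall_momentGF ν).hasFPowerSeriesAt
      (h.eventuallyEq_of_mem (ball_mem_nhds 0 one_pos))
  exact ext_of_forall_integral_toCircle_pow_eq
    (congrFun (FormalMultilinearSeries.ofScalars_series_injective ℂ ℂ h_series))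

lemma ext_of_eqOn_etaTransform [IsProbabilityMeasure μ] [IsProbabilityMeasure ν]
    (h : EqOn (etaTransform μ) (etaTransform ν) (ball 0 1)) : μ = ν := by
  refine ext_of_eqOn_momentGF fun z hz ↦ ?_
  have h_eta := h hz
  rw [mem_ball_zero_iff] at hz
  rwa [etaTransform_eq hz, etaTransform_eq hz, sub_right_inj, inv_inj] at h_eta

end Uniqueness

section Herglotz

variable {T : ℝ}

lemma herglotzRieszKernel_toCircle_neg {w : ℂ} (hw : ‖w‖ < 1) (θ : AddCircle T) :
    herglotzRieszKernel 0 w (toCircle (-θ)) = 2 * (1 - w * toCircle θ)⁻¹ - 1 := by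
  rw [toCircle_neg, Circle.coe_inv, herglotzRieszKernel_zero_inv (Circle.coe_ne_zero _)
    (one_sub_mul_toCircle_ne_zero hw θ)]

variable [Fact (0 < T)]

lemma circleAverage_eq_integral_haarAddCircle {E : Type*} [NormedAddCommGroup E] [NormedSpace ℝ E]
    (f : ℂ → E) : Real.circleAverage f 0 1 = ∫ θ : AddCircle T, f (toCircle θ) ∂haarAddCircle := by
  have hT : T ≠ 0 := (Fact.out : 0 < T).ne'
  have h_scale := intervalIntegral.smul_integral_comp_mul_left (a := 0) (b := T)
    (fun x ↦ f (circleMap 0 1 x)) (2 * Real.pi / T)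
  rw [mul_zero, div_mul_cancel₀ _ hT] at h_scale
  rw [integral_haarAddCircle, ← AddCircle.intervalIntegral_preimage T 0, Real.circleAverage_def,
    ← h_scale, smul_smul, zero_add]
  congr 1
  · field_simp
  · simp [toCircle_apply_mk, circleMap]

lemma integral_poisson_smul_toCircle_neg {E : Type*} [NormedAddCommGroup E] [NormedSpace ℂ E]
    [CompleteSpace E] {f : ℂ → E} (hf : DiffContOnCl ℂ f (ball 0 1)) {w : ℂ} (hw : w ∈ ball 0 1) :
    ∫ θ : AddCircle T, (2 * (1 - w * toCircle θ)⁻¹ - 1).re • f (toCircle (-θ)) ∂haarAddCircle =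
      f w := by
  rw [← hf.circleAverage_re_herglotzRieszKernel_smul hw,
    circleAverage_eq_integral_haarAddCircle (T := T),
    ← integral_neg_eq_self fun θ ↦ (_ • f) (toCircle θ : ℂ)]
  simp only [Pi.smul_apply', Function.comp_apply,
    herglotzRieszKernel_toCircle_neg (mem_ball_zero_iff.1 hw)]

lemma integral_re_toCircle_neg_mul_poisson {f : ℂ → ℂ} (hf : DiffContOnCl ℂ f (ball 0 1)) {w : ℂ}
    (hw : w ∈ ball 0 1) :
    ∫ θ : AddCircle T, (f (toCircle (-θ))).re * (2 * (1 - w * toCircle θ)⁻¹ - 1).re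
      ∂haarAddCircle = (f w).re := by
  have hf_cont : Continuous fun θ : AddCircle T ↦ f (toCircle (-θ)) :=
    hf.continuousOn_ball.comp_continuous (by fun_prop) fun θ ↦ by simp [Circle.norm_coe]
  have h_kernel := continuous_inv_one_sub_mul_toCircle (T := T) (mem_ball_zero_iff.1 hw)
  rw [← integral_poisson_smul_toCircle_neg (T := T) hf hw]
  have h_int := integrable_of_continuous (μ := haarAddCircle)
    ((continuous_re.comp ((h_kernel.const_mul 2).sub (continuous_const (y := 1)))).smul hf_cont)
  refine Eq.trans (integral_congr_ae (.of_forall fun θ ↦ ?_)) (integral_re h_int)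
  exact (mul_comm _ _).trans (re_ofReal_mul _ _).symm

lemma two_mul_re_momentGF_sub_one {μ : Measure (AddCircle T)} [IsProbabilityMeasure μ] {z : ℂ}
    (hz : ‖z‖ < 1) :
    2 * (momentGF μ z).re - 1 = ∫ θ, (2 * (1 - z * toCircle θ)⁻¹ - 1).re ∂μ := by
  have h_int := integrable_inv_one_sub_mul_toCircle (μ := μ) hz
  have h_int' := (h_int.const_mul 2).sub (integrable_const 1)
  calc 2 * (momentGF μ z).re - 1 = (2 * momentGF μ z - 1).re := by simp
    _ = (∫ θ, (2 * (1 - z * toCircle θ)⁻¹ - 1) ∂μ).re := by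
      rw [integral_sub (h_int.const_mul 2) (integrable_const _), integral_const_mul]
      simp [momentGF]
    _ = ∫ θ, (2 * (1 - z * toCircle θ)⁻¹ - 1).re ∂μ := (integral_re h_int').symm

lemma exists_eqOn_momentGF_of_diffContOnCl {g : ℂ → ℂ} (hg : DiffContOnCl ℂ g (ball 0 1))
    (hg_re : ∀ z ∈ sphere (0 : ℂ) 1, 1 / 2 ≤ (g z).re) (hg_zero : g 0 = 1) :
    ∃ μ : ProbabilityMeasure (AddCircle T),
      EqOn (momentGF (μ : Measure (AddCircle T))) g (ball 0 1) := by
  let f : ℂ → ℂ := fun z ↦ 2 * g z - 1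
  have hf : DiffContOnCl ℂ f (ball 0 1) := (hg.const_smul (2 : ℂ)).sub_const 1
  -- The Poisson kernel at `z` and `ζ` involves `z * ζ⁻¹` while `momentGF` involves `z * ζ`: hence
  -- the reflection `θ ↦ -θ` in the density.
  let ρ : AddCircle T → ℝ := fun θ ↦ (f (toCircle (-θ))).re
  have hρ_cont : Continuous ρ := continuous_re.comp <|
    hf.continuousOn_ball.comp_continuous (by fun_prop) fun θ ↦ by simp [Circle.norm_coe]
  have hρ_nonneg : 0 ≤ ρ := fun θ ↦ by
    have h_re := hg_re (toCircle (-θ)) (by simp [Circle.norm_coe])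
    have h_ρ : ρ θ = 2 * (g (toCircle (-θ))).re - 1 := by simp [ρ, f]
    rw [Pi.zero_apply, h_ρ]
    linarith
  have hρ_one : ∫ θ, ρ θ ∂haarAddCircle = 1 := by
    have h_kernel (θ : AddCircle T) : (2 * (1 - 0 * toCircle θ : ℂ)⁻¹ - 1).re = 1 := by norm_num
    have h_zero : (f 0).re = 1 := by norm_num [f, hg_zero]
    have h_poisson := integral_re_toCircle_neg_mul_poisson (T := T) hf (mem_ball_self one_pos)
    simpa only [h_kernel, h_zero, mul_one] using h_poisson
  let μ : Measure (AddCircle T) := haarAddCircle.withDensity fun θ ↦ ENNReal.ofReal (ρ θ)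
  have hμ : IsProbabilityMeasure μ :=
    isProbabilityMeasure_withDensity_ofReal (integrable_of_continuous hρ_cont) hρ_nonneg hρ_one
  have h_re (z : ℂ) (hz : z ∈ ball 0 1) : (momentGF μ z).re = (g z).re := by
    have h_poisson : 2 * (momentGF μ z).re - 1 = 2 * (g z).re - 1 := by
      rw [two_mul_re_momentGF_sub_one (mem_ball_zero_iff.1 hz),
        integral_withDensity_eq_integral_toReal_smul (by fun_prop) (by simp)]
      simp only [ENNReal.toReal_ofReal (hρ_nonneg _), smul_eq_mul]
      exact (integral_re_toCircle_neg_mul_poisson hf hz).trans (by simp [f])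
    linarith
  exact ⟨⟨μ, hμ⟩, eqOn_of_re_eq_of_eq (differentiableOn_momentGF μ) hg.differentiableOn
    isOpen_ball (convex_ball 0 1).isPreconnected h_re (mem_ball_self one_pos)
    (by simp [hg_zero])⟩

lemma continuous_momentGF_probabilityMeasure {z : ℂ} (hz : ‖z‖ < 1) :
    Continuous fun μ : ProbabilityMeasure (AddCircle T) ↦ momentGF (μ : Measure (AddCircle T)) z :=
  continuous_iff_continuousAt.2 fun _ ↦
    (ProbabilityMeasure.tendsto_iff_forall_integral_rclike_tendsto ℂ).1 tendsto_id
      (.mkOfCompact ⟨_, continuous_inv_one_sub_mul_toCircle hz⟩)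

lemma exists_eqOn_momentGF {g : ℂ → ℂ} (hg : DifferentiableOn ℂ g (ball 0 1))
    (hg_re : ∀ z ∈ ball 0 1, 1 / 2 ≤ (g z).re) (hg_zero : g 0 = 1) :
    ∃ μ : ProbabilityMeasure (AddCircle T),
      EqOn (momentGF (μ : Measure (AddCircle T))) g (ball 0 1) := by
  let Φ : ProbabilityMeasure (AddCircle T) → ball (0 : ℂ) 1 → ℂ := fun μ z ↦
    momentGF (μ : Measure (AddCircle T)) z
  have hΦ : Continuous Φ := continuous_pi fun z ↦
    continuous_momentGF_probabilityMeasure (mem_ball_zero_iff.1 z.2)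
  have h_dilate : ∀ᶠ r : ℝ in 𝓝[<] 1, (fun z : ball (0 : ℂ) 1 ↦ g (r * z)) ∈ range Φ := by
    filter_upwards [Ioo_mem_nhdsLT one_pos] with r hr
    have h_norm : ‖(r : ℂ)‖ < 1 := by simpa [abs_of_pos hr.1] using hr.2
    obtain ⟨μ, hμ⟩ := exists_eqOn_momentGF_of_diffContOnCl (T := T)
      (diffContOnCl_comp_const_mul hg h_norm)
      (fun z hz ↦ hg_re _ (by simpa [mem_sphere_zero_iff_norm.1 hz] using h_norm))
      (by simpa using hg_zero)
    exact ⟨μ, funext fun z ↦ hμ z.2⟩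
  have h_lim : Tendsto (fun (r : ℝ) (z : ball (0 : ℂ) 1) ↦ g (r * z)) (𝓝[<] 1)
      (𝓝 fun z ↦ g z) := by
    refine tendsto_pi_nhds.2 fun z ↦ ?_
    have h_mul : Tendsto (fun r : ℝ ↦ (r * z : ℂ)) (𝓝[<] 1) (𝓝 z) :=
      Continuous.tendsto' (by fun_prop) 1 _ (by simp) |>.mono_left nhdsWithin_le_nhds
    exact (hg.continuousOn.continuousAt (isOpen_ball.mem_nhds z.2)).tendsto.comp h_mul
  -- `ProbabilityMeasure (AddCircle T)` is weak-* compact, so the pointwise limits of functions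
  -- `momentGF μ` are again of this form.
  obtain ⟨μ, hμ⟩ := (isCompact_range hΦ).isClosed.mem_of_tendsto h_lim h_dilate
  exact ⟨μ, fun z hz ↦ congrFun hμ ⟨z, hz⟩⟩

lemma IsSchwarzFunction.existsUnique_etaTransform {f : ℂ → ℂ} (hf : IsSchwarzFunction f) :
    ∃! μ : Measure (AddCircle T), IsProbabilityMeasure μ ∧ EqOn (etaTransform μ) f (ball 0 1) := by
  have h_lt {z : ℂ} (hz : z ∈ ball 0 1) : ‖f z‖ < 1 := mem_ball_zero_iff.1 (hf.mapsTo_ball hz)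
  obtain ⟨μ, hμ⟩ := exists_eqOn_momentGF (T := T) (g := fun z ↦ (1 - f z)⁻¹)
    ((hf.differentiableOn.const_sub 1).inv fun z hz ↦ one_sub_ne_zero_of_norm_lt_one (h_lt hz))
    (fun z hz ↦ half_le_re_inv_one_sub (h_lt hz)) (by simp [hf.map_zero])
  have hμ_eta : EqOn (etaTransform (μ : Measure (AddCircle T))) f (ball 0 1) := fun z hz ↦ by
    rw [etaTransform_eq (mem_ball_zero_iff.1 hz), hμ hz, inv_inv, sub_sub_cancel]
  refine ⟨μ, ⟨inferInstance, hμ_eta⟩, fun ν ⟨_, hν⟩ ↦ ?_⟩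
  exact ext_of_eqOn_etaTransform (hν.trans hμ_eta.symm)

end Herglotz

section Embedding

variable {T : ℝ} [Fact (0 < T)]

lemma measurableEmbedding_coe_toCircle :
    MeasurableEmbedding fun θ : AddCircle T ↦ (toCircle θ : ℂ) := by
  have h_cont : Continuous fun θ : AddCircle T ↦ (toCircle θ : ℂ) := by fun_prop
  exact (h_cont.isClosedEmbedding (Circle.coe_injective.comp
    (injective_toCircle (Fact.out : 0 < T).ne'))).measurableEmbedding

lemma range_coe_toCircle : range (fun θ : AddCircle T ↦ (toCircle θ : ℂ)) = {ζ | ‖ζ‖ = 1} := by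
  refine Subset.antisymm (range_subset_iff.2 fun θ ↦ Circle.norm_coe _) fun ζ hζ ↦ ?_
  obtain ⟨θ, hθ⟩ := (homeomorphCircle (Fact.out : 0 < T).ne').surjective
    ⟨ζ, mem_sphere_zero_iff_norm.2 hζ⟩
  exact ⟨θ, congrArg Subtype.val ((homeomorphCircle_apply _ θ).symm.trans hθ)⟩

lemma map_coe_toCircle_compl_eq_zero (ν : Measure (AddCircle T)) :
    ν.map (fun θ ↦ (toCircle θ : ℂ)) {ζ | ‖ζ‖ = 1}ᶜ = 0 := by
  rw [measurableEmbedding_coe_toCircle.map_apply, ← range_coe_toCircle (T := T), preimage_compl,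
    preimage_range, compl_univ, measure_empty]

lemma exists_map_coe_toCircle_eq {μ : Measure ℂ} [IsProbabilityMeasure μ]
    (hμ : μ {ζ : ℂ | ‖ζ‖ = 1}ᶜ = 0) :
    ∃ ν : Measure (AddCircle T), IsProbabilityMeasure ν ∧
      ν.map (fun θ ↦ (toCircle θ : ℂ)) = μ := by
  have h_range : ∀ᵐ ζ ∂μ, ζ ∈ range fun θ : AddCircle T ↦ (toCircle θ : ℂ) := by
    rwa [range_coe_toCircle]
  exact ⟨_, measurableEmbedding_coe_toCircle.isProbabilityMeasure_comap h_range,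
    (measurableEmbedding_coe_toCircle.map_comap μ).trans
      (Measure.restrict_eq_self_of_ae_mem h_range)⟩

lemma psi_map_coe_toCircle (ν : Measure (AddCircle T)) (z : ℂ) :
    ∫ ζ, z * ζ / (1 - z * ζ) ∂ν.map (fun θ ↦ (toCircle θ : ℂ)) = psiTransform ν z :=
  measurableEmbedding_coe_toCircle.integral_map _

end Embedding

lemma norm_integral_id_le_one {μ : Measure ℂ} [IsProbabilityMeasure μ]
    (hμ : μ {ζ : ℂ | ‖ζ‖ = 1}ᶜ = 0) : ‖∫ ζ, ζ ∂μ‖ ≤ 1 := by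
  have h_norm : ∀ᵐ ζ ∂μ, ‖ζ‖ = 1 := hμ
  simpa using norm_integral_le_of_norm_le_const (h_norm.mono fun _ ↦ le_of_eq)

lemma IsSchwarzFunction.existsUnique_measure {f : ℂ → ℂ} (hf : IsSchwarzFunction f) :
    ∃! μ : Measure ℂ, IsProbabilityMeasure μ ∧ μ {ζ : ℂ | ‖ζ‖ = 1}ᶜ = 0 ∧
      ∀ z ∈ ball (0 : ℂ) 1, f z = (∫ ζ : ℂ, (z * ζ) / (1 - z * ζ) ∂μ) /
        (1 + ∫ ζ : ℂ, (z * ζ) / (1 - z * ζ) ∂μ) := by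
  obtain ⟨ν, ⟨_, hν⟩, h_unique⟩ := hf.existsUnique_etaTransform (T := 1)
  refine ⟨ν.map fun θ ↦ (toCircle θ : ℂ),
    ⟨Measure.isProbabilityMeasure_map measurableEmbedding_coe_toCircle.measurable.aemeasurable,
      map_coe_toCircle_compl_eq_zero ν, fun z hz ↦ ?_⟩, ?_⟩
  · rw [psi_map_coe_toCircle]
    exact (hν hz).symm
  · rintro μ ⟨_, hμ, h_eta⟩
    obtain ⟨ν', hν', rfl⟩ := exists_map_coe_toCircle_eq (T := 1) hμ
    simp only [psi_map_coe_toCircle] at h_eta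
    rw [h_unique ν' ⟨hν', fun z hz ↦ (h_eta z hz).symm⟩]

theorem stmt7_general (μ₁ μ₂ : Measure ℂ) [IsProbabilityMeasure μ₁] [IsProbabilityMeasure μ₂]
    (hsupp₁ : μ₁ {ζ : ℂ | ‖ζ‖ = 1}ᶜ = 0) (hsupp₂ : μ₂ {ζ : ℂ | ‖ζ‖ = 1}ᶜ = 0)
    (α : ℂ) (hα : ‖α‖ ≤ 1)
    (η₁ η₂ η : ℂ → ℂ)
    (hη₁ : ∀ z, η₁ z = (∫ ζ : ℂ, (z * ζ) / (1 - z * ζ) ∂μ₁) /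
      (1 + ∫ ζ : ℂ, (z * ζ) / (1 - z * ζ) ∂μ₁))
    (hη₂ : ∀ z, η₂ z = (∫ ζ : ℂ, (z * ζ) / (1 - z * ζ) ∂μ₂) /
      (1 + ∫ ζ : ℂ, (z * ζ) / (1 - z * ζ) ∂μ₂))
    (hη : ∀ z, η z = if α ≠ 0 then η₁ (α⁻¹ * η₂ (α * z)) else η₁ (deriv η₂ 0 * z)) :
    AnalyticOnNhd ℂ η (Metric.ball (0 : ℂ) 1) ∧
      (∀ z ∈ Metric.ball (0 : ℂ) 1, ‖η z‖ ≤ ‖z‖) ∧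
      (∃! μ : Measure ℂ, IsProbabilityMeasure μ ∧ μ {ζ : ℂ | ‖ζ‖ = 1}ᶜ = 0 ∧
        ∀ z ∈ Metric.ball (0 : ℂ) 1,
          η z = (∫ ζ : ℂ, (z * ζ) / (1 - z * ζ) ∂μ) /
            (1 + ∫ ζ : ℂ, (z * ζ) / (1 - z * ζ) ∂μ)) := by
  obtain ⟨ν₁, _, rfl⟩ := exists_map_coe_toCircle_eq (T := 1) hsupp₁
  obtain ⟨ν₂, _, rfl⟩ := exists_map_coe_toCircle_eq (T := 1) hsupp₂
  simp only [psi_map_coe_toCircle] at hη₁ hη₂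
  obtain rfl : η₁ = etaTransform ν₁ := funext hη₁
  obtain rfl : η₂ = etaTransform ν₂ := funext hη₂
  have h_schwarz₂ := isSchwarzFunction_etaTransform ν₂
  have h_comp : η = etaTransform ν₁ ∘ fun z ↦ z * dslope (etaTransform ν₂) 0 (α * z) := by
    ext z
    rw [hη, ← apply_ite, ite_inv_mul_eq_mul_dslope h_schwarz₂.map_zero]
    rfl
  have h_schwarz : IsSchwarzFunction η :=
    h_comp ▸ (isSchwarzFunction_etaTransform ν₁).comp (h_schwarz₂.mul_dslope_const_mul hα)
  exact ⟨h_schwarz.differentiableOn.analyticOnNhd isOpen_ball, fun _ hz ↦ h_schwarz.norm_le hz,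
    h_schwarz.existsUnique_measure⟩

/-- The multiplicative monotonic convolution of two probability measures on the
unit circle is a probability measure on the unit circle: the function
`η(z) = η_{μ₁}(α⁻¹ η_{μ₂}(αz))` (with `α = ∫ ζ dμ₁`, interpreted as
`η_{μ₁}(η_{μ₂}'(0) z)` when `α = 0`) is analytic on `𝔻`, satisfies
`|η(z)| ≤ |z|`, and equals `η_μ` for a unique probability measure `μ` on `𝕋`. -/
theorem stmt7 (μ₁ μ₂ : Measure ℂ) [IsProbabilityMeasure μ₁] [IsProbabilityMeasure μ₂]
    (hsupp₁ : μ₁ {ζ : ℂ | ‖ζ‖ = 1}ᶜ = 0) (hsupp₂ : μ₂ {ζ : ℂ | ‖ζ‖ = 1}ᶜ = 0)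
    (α : ℂ) (hα : α = ∫ ζ : ℂ, ζ ∂μ₁)
    (η₁ η₂ η : ℂ → ℂ)
    (hη₁ : ∀ z, η₁ z = (∫ ζ : ℂ, (z * ζ) / (1 - z * ζ) ∂μ₁) /
      (1 + ∫ ζ : ℂ, (z * ζ) / (1 - z * ζ) ∂μ₁))
    (hη₂ : ∀ z, η₂ z = (∫ ζ : ℂ, (z * ζ) / (1 - z * ζ) ∂μ₂) /
      (1 + ∫ ζ : ℂ, (z * ζ) / (1 - z * ζ) ∂μ₂))
    (hη : ∀ z, η z = if α ≠ 0 then η₁ (α⁻¹ * η₂ (α * z)) else η₁ (deriv η₂ 0 * z)) :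
    AnalyticOnNhd ℂ η (Metric.ball (0 : ℂ) 1) ∧
      (∀ z ∈ Metric.ball (0 : ℂ) 1, ‖η z‖ ≤ ‖z‖) ∧
      (∃! μ : Measure ℂ, IsProbabilityMeasure μ ∧ μ {ζ : ℂ | ‖ζ‖ = 1}ᶜ = 0 ∧
        ∀ z ∈ Metric.ball (0 : ℂ) 1,
          η z = (∫ ζ : ℂ, (z * ζ) / (1 - z * ζ) ∂μ) /
            (1 + ∫ ζ : ℂ, (z * ζ) / (1 - z * ζ) ∂μ)) := by
  exact stmt7_general μ₁ μ₂ hsupp₁ hsupp₂ α (hα ▸ norm_integral_id_le_one hsupp₁) η₁ η₂ η hη₁ hη₂ hη
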